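/- arXiv:1608.08907 — 3 statements merged into one kernel-verified Lean document; each statement's English description precedes it below -/
import Mathlib

section
/- Fix real numbers SNR1, SNR2 > 0, bSNR2 > 0, and INR21 > 1, and assume bSNR2 ≤ SNR1 and SNR1 ≤ INR21. For every ρ ∈ [0,1], κ_{3,1}(ρ) − a_{6,1}(0,0) ≤ 3/2, where κ_{3,1}(ρ) = (1/2)·log((b_{4,1}(ρ)+b_{5,2}(ρ)+1)·bSNR2/((b_{1,2}(1)+1)·(b_{4,1}(ρ)+1)) + 1) + (1/2)·log(b_{4,1}(ρ)+1) and a_{6,1}(0,0) = (1/2)·log(SNR1 + 2) − 1/2. -/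
/-!
The two logarithms of `κ_{3,1}(ρ)` merge into `(1/2) log (P + (b_{4,1}(ρ) + 1))`, where
`P = (b_{4,1}(ρ) + b_{5,2}(ρ) + 1) bSNR2 / (b_{1,2}(1) + 1)`. Both `b_{4,1}(ρ) ≤ SNR1` and
`b_{5,2}(ρ)` are at most `INR21 ≤ b_{1,2}(1)`, so `P ≤ 2 bSNR2 ≤ 2 SNR1`. The argument of the
logarithm is then at most `2² (SNR1 + 2)`, which costs one bit over `(1/2) log (SNR1 + 2)`; the
remaining half bit is the `-1/2` in `a_{6,1}(0,0)`.
-/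

/-- The paper's `b_{1,2}(ρ)`: received power at receiver 2, in units of the noise power, when the
channel inputs have correlation `ρ`. -/
noncomputable def b12 (SNR2 INR21 ρ : ℝ) : ℝ :=
  SNR2 + 2 * ρ * Real.sqrt (SNR2 * INR21) + INR21

/-- The paper's `b_{4,1}(ρ)`: the part of `SNR1` left when the component correlated with the other
input is removed. -/
def b41 (SNR1 ρ : ℝ) : ℝ :=
  (1 - ρ ^ 2) * SNR1

/-- The paper's `b_{5,2}(ρ)`: the part of `INR21` left when the component correlated with the other
input is removed. -/
def b52 (INR21 ρ : ℝ) : ℝ :=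
  (1 - ρ ^ 2) * INR21

/-- The paper's outer bound `κ_{3,1}(ρ)`, with the channel parameters as explicit arguments. -/
noncomputable def kappa31 (SNR1 SNR2 bSNR2 INR21 ρ : ℝ) : ℝ :=
  (1 / 2) * Real.logb 2
    ((b41 SNR1 ρ + b52 INR21 ρ + 1) * bSNR2 / ((b12 SNR2 INR21 1 + 1) * (b41 SNR1 ρ + 1)) + 1) +
  (1 / 2) * Real.logb 2 (b41 SNR1 ρ + 1)

/-- The term that `bSNR2` contributes to `κ_{3,1}(ρ)` once its two logarithms are
merged. -/
noncomputable def feedbackTerm (SNR1 SNR2 bSNR2 INR21 ρ : ℝ) : ℝ :=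
  (b41 SNR1 ρ + b52 INR21 ρ + 1) * bSNR2 / (b12 SNR2 INR21 1 + 1)

/-- The paper's achievable bound `a_{6,1}(ρ, μ)` at `ρ = μ = 0`, the only point compared with
`kappa31`. -/
noncomputable def a61Zero (SNR1 : ℝ) : ℝ :=
  (1 / 2) * Real.logb 2 (SNR1 + 2) - 1 / 2

theorem logb_div_mul_add_one_add_logb {b x d a : ℝ} (ha : a ≠ 0) (hxa : x / d + a ≠ 0) :
    Real.logb b (x / (d * a) + 1) + Real.logb b a = Real.logb b (x / d + a) := by
  have hquot : x / (d * a) + 1 = (x / d + a) / a := by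
    rw [div_mul_eq_div_div, add_div, div_self ha]
  rw [hquot, Real.logb_div hxa ha, sub_add_cancel]

theorem logb_le_add_logb_of_le_rpow_mul {b c x y : ℝ} (hb : 1 < b) (hx : 0 < x)
    (hxy : x ≤ b ^ c * y) : Real.logb b x ≤ c + Real.logb b y := by
  have hb0 : 0 < b := one_pos.trans hb
  have hbc : 0 < b ^ c := Real.rpow_pos_of_pos hb0 c
  have hy : 0 < y := pos_of_mul_pos_right (hx.trans_le hxy) hbc.le
  calc Real.logb b x ≤ Real.logb b (b ^ c * y) := Real.logb_le_logb_of_le hb hx hxy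
    _ = c + Real.logb b y := by
      rw [Real.logb_mul hbc.ne' hy.ne', Real.logb_rpow hb0 hb.ne']

theorem one_sub_sq_mul_mem_Icc {ρ x : ℝ} (hρ : |ρ| ≤ 1) (hx : 0 ≤ x) :
    (1 - ρ ^ 2) * x ∈ Set.Icc 0 x :=
  ⟨mul_nonneg (sub_nonneg.2 ((sq_le_one_iff_abs_le_one ρ).2 hρ)) hx,
    mul_le_of_le_one_left hx (sub_le_self 1 (sq_nonneg ρ))⟩

theorem b41_mem_Icc {SNR1 ρ : ℝ} (hρ : |ρ| ≤ 1) (hS1 : 0 ≤ SNR1) :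
    b41 SNR1 ρ ∈ Set.Icc 0 SNR1 :=
  one_sub_sq_mul_mem_Icc hρ hS1

theorem b52_mem_Icc {INR21 ρ : ℝ} (hρ : |ρ| ≤ 1) (hI : 0 ≤ INR21) :
    b52 INR21 ρ ∈ Set.Icc 0 INR21 :=
  one_sub_sq_mul_mem_Icc hρ hI

theorem le_b12 {SNR2 INR21 ρ : ℝ} (hS2 : 0 ≤ SNR2) (hρ : 0 ≤ ρ) :
    INR21 ≤ b12 SNR2 INR21 ρ :=
  le_add_of_nonneg_left (by positivity)

section

variable {SNR1 SNR2 bSNR2 INR21 ρ : ℝ}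

theorem feedbackTerm_nonneg (hS1 : 0 ≤ SNR1) (hS2 : 0 ≤ SNR2) (hb2 : 0 ≤ bSNR2)
    (hI : 0 ≤ INR21) (hρ : |ρ| ≤ 1) :
    0 ≤ feedbackTerm SNR1 SNR2 bSNR2 INR21 ρ := by
  have h41 : 0 ≤ b41 SNR1 ρ := (b41_mem_Icc hρ hS1).1
  have h52 : 0 ≤ b52 INR21 ρ := (b52_mem_Icc hρ hI).1
  have h12 : 0 ≤ b12 SNR2 INR21 1 := hI.trans (le_b12 hS2 zero_le_one)
  rw [feedbackTerm]
  positivity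

theorem feedbackTerm_le_two_mul (hS1 : 0 ≤ SNR1) (hS2 : 0 ≤ SNR2) (hb2 : 0 ≤ bSNR2)
    (hSI : SNR1 ≤ INR21) (hρ : |ρ| ≤ 1) :
    feedbackTerm SNR1 SNR2 bSNR2 INR21 ρ ≤ 2 * bSNR2 := by
  have hI : 0 ≤ INR21 := hS1.trans hSI
  have h12 : INR21 ≤ b12 SNR2 INR21 1 := le_b12 hS2 zero_le_one
  have hpower : b41 SNR1 ρ + b52 INR21 ρ + 1 ≤ 2 * (b12 SNR2 INR21 1 + 1) := by
    linarith [(b41_mem_Icc hρ hS1).2, (b52_mem_Icc hρ hI).2]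
  rw [feedbackTerm, div_le_iff₀ (by linarith)]
  calc (b41 SNR1 ρ + b52 INR21 ρ + 1) * bSNR2
      ≤ 2 * (b12 SNR2 INR21 1 + 1) * bSNR2 := mul_le_mul_of_nonneg_right hpower hb2
    _ = 2 * bSNR2 * (b12 SNR2 INR21 1 + 1) := mul_right_comm _ _ _

theorem kappa31_eq_half_logb (hS1 : 0 ≤ SNR1) (hS2 : 0 ≤ SNR2) (hb2 : 0 ≤ bSNR2)
    (hI : 0 ≤ INR21) (hρ : |ρ| ≤ 1) :
    kappa31 SNR1 SNR2 bSNR2 INR21 ρ =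
      (1 / 2) * Real.logb 2 (feedbackTerm SNR1 SNR2 bSNR2 INR21 ρ + (b41 SNR1 ρ + 1)) := by
  have hA : 0 < b41 SNR1 ρ + 1 := add_pos_of_nonneg_of_pos (b41_mem_Icc hρ hS1).1 one_pos
  have hP := feedbackTerm_nonneg hS1 hS2 hb2 hI hρ
  rw [kappa31, ← mul_add,
    logb_div_mul_add_one_add_logb hA.ne' (add_pos_of_nonneg_of_pos hP hA).ne', feedbackTerm]

theorem kappa31_sub_a61_le_three_halves_general (hS1 : 0 ≤ SNR1) (hS2 : 0 ≤ SNR2)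
    (hb2 : 0 ≤ bSNR2) (hbS : bSNR2 ≤ SNR1) (hSI : SNR1 ≤ INR21) (hρ : |ρ| ≤ 1) :
    kappa31 SNR1 SNR2 bSNR2 INR21 ρ - a61Zero SNR1 ≤ 3 / 2 := by
  have hI : 0 ≤ INR21 := hS1.trans hSI
  obtain ⟨h41_nonneg, h41_le⟩ := b41_mem_Icc hρ hS1
  have hP_nonneg := feedbackTerm_nonneg hS1 hS2 hb2 hI hρ
  have hP_le := feedbackTerm_le_two_mul hS1 hS2 hb2 hSI hρ
  rw [kappa31_eq_half_logb hS1 hS2 hb2 hI hρ, a61Zero]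
  have harg : feedbackTerm SNR1 SNR2 bSNR2 INR21 ρ + (b41 SNR1 ρ + 1) ≤
      2 ^ (2 : ℝ) * (SNR1 + 2) := by
    rw [Real.rpow_two]
    linarith
  have hlog : Real.logb 2 (feedbackTerm SNR1 SNR2 bSNR2 INR21 ρ + (b41 SNR1 ρ + 1)) ≤
      2 + Real.logb 2 (SNR1 + 2) :=
    logb_le_add_logb_of_le_rpow_mul one_lt_two (by positivity) harg
  linarith

end

/-- Case 1.1.3.1 of the gap analysis:
`κ_{3,1}(ρ) − a_{6,1}(0,0) ≤ 3/2` when `bSNR2 ≤ SNR1` and `SNR1 ≤ INR21`. -/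
theorem kappa31_sub_a61_le_three_halves
    (SNR1 SNR2 bSNR2 INR21 : ℝ)
    (hS1 : 0 < SNR1) (hS2 : 0 < SNR2) (hb2 : 0 < bSNR2) (h21 : 1 < INR21)
    (hbS : bSNR2 ≤ SNR1) (hSI : SNR1 ≤ INR21) :
    ∀ ρ ∈ Set.Icc (0 : ℝ) 1,
    ((1/2) * Real.logb 2
      ((((1 - ρ^2) * SNR1 + (1 - ρ^2) * INR21 + 1) * bSNR2) /
        (((SNR2 + 2 * Real.sqrt (SNR2 * INR21) + INR21) + 1) * ((1 - ρ^2) * SNR1 + 1)) + 1) +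
      (1/2) * Real.logb 2 ((1 - ρ^2) * SNR1 + 1)) -
      ((1/2) * Real.logb 2 (SNR1 + 2) - 1/2) ≤ 3/2 := by
  intro ρ hρ
  simpa only [kappa31, a61Zero, b12, b41, b52, mul_one] using
    kappa31_sub_a61_le_three_halves_general hS1.le hS2.le hb2.le hbS hSI
      ((abs_of_nonneg hρ.1).trans_le hρ.2)
end

section
/- Fix real numbers SNR1, SNR2 > 0, bSNR1, bSNR2 > 0, and INR12, INR21 > 1, and assume the high-interference and feedback conditions of Case 1.1: INR12 > SNR1, INR21 > SNR2, bSNR2 ≤ SNR1, and bSNR1 ≤ SNR2. Then for every ρ' ∈ [0,1), min(κ_4(ρ'), κ_5(ρ')) − min(a_{2,1}(0) + a_{1,2}, a_{1,1} + a_{2,2}(0), a_{5,1}(0,0) + a_{5,2}(0,0)) ≤ 2 + (1/2)·log(3). (Here a_{2,i}(0) = (1/2)·log(SNR_i + INR_ij + 1) − 1/2, a_{1,i} = (1/2)·log(2 + SNR_i/INR_ji) − 1/2, a_{5,1}(0,0) = (1/2)·log(SNR1/INR21 + INR12 + 1) − 1/2, and a_{5,2}(0,0) = (1/2)·log(SNR2/INR12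 + INR21 + 1) − 1/2.) -/
/-!
By AM-GM the correlation term `2ρ√(SNR·INR)` is at most `SNR + INR`, so removing the correlation
from a converse bound costs half a bit, and the two `-1/2` losses of an achievable bound account for
one more bit. What is left is compared logarithm by logarithm: the terms of `a₁ + a₂` dominate those
of the converse bound with the same indices. In `a₅ + a₅` the direct signals are attenuated, so one
uses the converse bound whose received power `SNR + INR` belongs to a receiver with strong
interference; there it is at most `2·INR`, which costs a last half bit.
-/

theorem mul_div_one_add_mul_le_div {K : Type*} [Field K] [LinearOrder K] [IsStrictOrderedRing K]
    {t S I : K} (ht : 0 ≤ t) (hS : 0 ≤ S) (hI : 0 < I) :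
    t * S / (1 + t * I) ≤ S / I := by
  rw [div_le_div_iff₀ (by positivity) hI]
  linarith

theorem abs_two_mul_mul_sqrt_mul_le_add {ρ S I : ℝ} (hρ : |ρ| ≤ 1) (hS : 0 ≤ S) (hI : 0 ≤ I) :
    |2 * ρ * √(S * I)| ≤ S + I :=
  calc |2 * ρ * √(S * I)| = |ρ| * (2 * √S * √I) := by
        rw [Real.sqrt_mul hS, abs_mul, abs_mul, abs_two,
          abs_of_nonneg (by positivity : 0 ≤ √S * √I)]
        ring
    _ ≤ 2 * √S * √I := mul_le_of_le_one_left (by positivity) hρ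
    _ ≤ √S ^ 2 + √I ^ 2 := two_mul_le_add_sq _ _
    _ = S + I := by rw [Real.sq_sqrt hS, Real.sq_sqrt hI]

theorem logb_two_le_logb_two_add_one {x y : ℝ} (hx : 0 < x) (hxy : x ≤ 2 * y) :
    Real.logb 2 x ≤ Real.logb 2 y + 1 := by
  have hy : 0 < y := by linarith
  calc Real.logb 2 x ≤ Real.logb 2 (2 * y) := Real.logb_le_logb_of_le one_lt_two hx hxy
    _ = Real.logb 2 y + 1 := by
        rw [Real.logb_mul two_ne_zero hy.ne', Real.logb_self_eq_one one_lt_two, add_comm]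

/-- The converse sum-rate bound with input correlation `ρ`: `κ₄(ρ)` for `S = SNR1`, `S' = SNR2`,
`I' = INR21`, and `κ₅(ρ)` for `S = SNR2`, `S' = SNR1`, `I' = INR12`. -/
noncomputable def converseSumRate (S S' I' ρ : ℝ) : ℝ :=
  1 / 2 * Real.logb 2 (1 + (1 - ρ ^ 2) * S / (1 + (1 - ρ ^ 2) * I')) +
    1 / 2 * Real.logb 2 (S' + 2 * ρ * √(S' * I') + I' + 1)

/-- The achievable bound `a_{1,i}` on the rate of the private message of transmitter `i`, with
`S = SNR_i` and `I' = INR_ji`. -/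
noncomputable def privateRate (S I' : ℝ) : ℝ :=
  1 / 2 * Real.logb 2 (2 + S / I') - 1 / 2

/-- The achievable bound `a_{2,i}(0)` on the rate of everything decoded at receiver `i`, with
`S = SNR_i` and `I = INR_ij`. -/
noncomputable def receivedRate (S I : ℝ) : ℝ :=
  1 / 2 * Real.logb 2 (S + I + 1) - 1 / 2

/-- The achievable bound `a_{5,i}(0,0)`, in which receiver `i` sees the interference together with
its private signal only; `S = SNR_i`, `I = INR_ij` and `I' = INR_ji`. -/
noncomputable def interferenceRate (S I I' : ℝ) : ℝ :=
  1 / 2 * Real.logb 2 (S / I' + I + 1) - 1 / 2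

section ConverseSumRate

variable {S S' I I' ρ : ℝ}

theorem converseSumRate_le_uncorrelated (hS : 0 ≤ S) (hS' : 0 ≤ S') (hI' : 0 < I')
    (hρ : |ρ| ≤ 1) :
    converseSumRate S S' I' ρ ≤
      1 / 2 * Real.logb 2 (1 + S / I') + 1 / 2 * Real.logb 2 (S' + I' + 1) + 1 / 2 := by
  have ht : 0 ≤ 1 - ρ ^ 2 := sub_nonneg.2 ((sq_le_one_iff_abs_le_one ρ).2 hρ)
  have hdirect : Real.logb 2 (1 + (1 - ρ ^ 2) * S / (1 + (1 - ρ ^ 2) * I')) ≤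
      Real.logb 2 (1 + S / I') :=
    Real.logb_le_logb_of_le one_lt_two (by positivity)
      (add_le_add_right (mul_div_one_add_mul_le_div ht hS hI') 1)
  have hreceived : Real.logb 2 (S' + 2 * ρ * √(S' * I') + I' + 1) ≤
      Real.logb 2 (S' + I' + 1) + 1 := by
    obtain ⟨hlower, hupper⟩ := abs_le.1 (abs_two_mul_mul_sqrt_mul_le_add hρ hS' hI'.le)
    exact logb_two_le_logb_two_add_one (by linarith) (by linarith)
  unfold converseSumRate
  linarith

theorem converseSumRate_le_privateRate_add_receivedRate (hS : 0 ≤ S) (hS' : 0 ≤ S')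
    (hI' : 0 < I') (hρ : |ρ| ≤ 1) :
    converseSumRate S S' I' ρ ≤ privateRate S I' + receivedRate S' I' + 3 / 2 := by
  have hprivate : Real.logb 2 (1 + S / I') ≤ Real.logb 2 (2 + S / I') :=
    Real.logb_le_logb_of_le one_lt_two (by positivity) (by linarith)
  have hconverse := converseSumRate_le_uncorrelated hS hS' hI' hρ
  unfold privateRate receivedRate
  linarith

theorem converseSumRate_le_interferenceRate_add_interferenceRate (hS : 0 ≤ S) (hS' : 0 ≤ S')
    (hI : 0 < I) (hI' : 0 < I') (hS'I' : S' ≤ I') (hρ : |ρ| ≤ 1) :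
    converseSumRate S S' I' ρ ≤ interferenceRate S I I' + interferenceRate S' I' I + 2 := by
  have hdirect : Real.logb 2 (1 + S / I') ≤ Real.logb 2 (S / I' + I + 1) :=
    Real.logb_le_logb_of_le one_lt_two (by positivity) (by linarith)
  have hreceived : Real.logb 2 (S' + I' + 1) ≤ Real.logb 2 (S' / I + I' + 1) + 1 := by
    have hattenuated : 0 ≤ S' / I := by positivity
    exact logb_two_le_logb_two_add_one (by positivity) (by linarith)
  have hconverse := converseSumRate_le_uncorrelated hS hS' hI' hρ
  unfold interferenceRate
  linarith

end ConverseSumRate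

theorem sum_rate_gap_case11_general {SNR1 SNR2 INR12 INR21 ρ : ℝ}
    (hS1 : 0 ≤ SNR1) (hS2 : 0 ≤ SNR2) (h12 : 0 < INR12) (h21 : 0 < INR21)
    (hHIR : SNR1 ≤ INR12 ∨ SNR2 ≤ INR21) (hρ : |ρ| ≤ 1) :
    min (converseSumRate SNR1 SNR2 INR21 ρ) (converseSumRate SNR2 SNR1 INR12 ρ) -
      min (receivedRate SNR1 INR12 + privateRate SNR2 INR12)
        (min (privateRate SNR1 INR21 + receivedRate SNR2 INR21)
          (interferenceRate SNR1 INR12 INR21 + interferenceRate SNR2 INR21 INR12)) ≤ 2 := by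
  rw [sub_le_comm, le_min_iff, le_min_iff]
  refine ⟨?_, ?_, ?_⟩ <;> rw [sub_le_iff_le_add]
  · refine min_le_of_right_le ?_
    linarith [converseSumRate_le_privateRate_add_receivedRate hS2 hS1 h12 hρ]
  · refine min_le_of_left_le ?_
    linarith [converseSumRate_le_privateRate_add_receivedRate hS1 hS2 h21 hρ]
  · rcases hHIR with hSI1 | hSI2
    · refine min_le_of_right_le ?_
      linarith [converseSumRate_le_interferenceRate_add_interferenceRate hS2 hS1 h21 h12 hSI1 hρ]
    · exact min_le_of_left_le
        (converseSumRate_le_interferenceRate_add_interferenceRate hS1 hS2 h12 h21 hSI2 hρ)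

/-- Sum-rate gap in Case 1.1: the active converse sum-rate bound exceeds the
active achievable sum-rate bound by at most `2 + (1/2)·log 3` bits. -/
theorem sum_rate_gap_case11
    (SNR1 SNR2 bSNR1 bSNR2 INR12 INR21 : ℝ)
    (hS1 : 0 < SNR1) (hS2 : 0 < SNR2) (hb1 : 0 < bSNR1) (hb2 : 0 < bSNR2)
    (h12 : 1 < INR12) (h21 : 1 < INR21)
    (hHIR1 : INR12 > SNR1) (hHIR2 : INR21 > SNR2)
    (hFB1 : bSNR2 ≤ SNR1) (hFB2 : bSNR1 ≤ SNR2) :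
    ∀ ρ' ∈ Set.Ico (0 : ℝ) 1,
    min ((1/2) * Real.logb 2 (1 + ((1 - ρ'^2) * SNR1) / (1 + (1 - ρ'^2) * INR21)) +
          (1/2) * Real.logb 2 ((SNR2 + 2 * ρ' * Real.sqrt (SNR2 * INR21) + INR21) + 1))
        ((1/2) * Real.logb 2 (1 + ((1 - ρ'^2) * SNR2) / (1 + (1 - ρ'^2) * INR12)) +
          (1/2) * Real.logb 2 ((SNR1 + 2 * ρ' * Real.sqrt (SNR1 * INR12) + INR12) + 1)) -
    min (((1/2) * Real.logb 2 (SNR1 + INR12 + 1) - 1/2) +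
          ((1/2) * Real.logb 2 (2 + SNR2 / INR12) - 1/2))
      (min (((1/2) * Real.logb 2 (2 + SNR1 / INR21) - 1/2) +
             ((1/2) * Real.logb 2 (SNR2 + INR21 + 1) - 1/2))
           (((1/2) * Real.logb 2 (SNR1 / INR21 + INR12 + 1) - 1/2) +
             ((1/2) * Real.logb 2 (SNR2 / INR12 + INR21 + 1) - 1/2))) ≤
    2 + (1/2) * Real.logb 2 3 := by
  intro ρ' ⟨hρ0, hρ1⟩
  have hlog : 0 ≤ Real.logb 2 3 := Real.logb_nonneg one_lt_two (by norm_num)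
  exact (sum_rate_gap_case11_general hS1.le hS2.le (one_pos.trans h12) (one_pos.trans h21)
    (.inl hHIR1.le) (abs_le.2 ⟨by linarith, hρ1.le⟩)).trans (by linarith)
end

section
/- Fix real numbers SNR1, SNR2 > 0 and INR12, INR21 > 1, and assume INR21 > SNR2. For every ρ' ∈ [0,1), κ_{1,1}(ρ') + κ_4(ρ') − (a_{1,1} + a_{7,1}(0,0,0) + a_{5,2}(0,0)) ≤ 3, where a_{1,1} = (1/2)·log(2 + SNR1/INR21) − 1/2, a_{7,1}(0,0,0) = (1/2)·log(SNR1 + INR12 + 1) − 1/2, and a_{5,2}(0,0) = (1/2)·log(SNR2/INR12 + INR21 + 1) − 1/2. -/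
/-!
With `|ρ| ≤ 1`, the arithmetic–geometric mean inequality shows that coherent combining at most
doubles the received power, which costs one bit inside each of the two received-power logarithms.
The second one is compared with an expression in which `SNR2` is divided by `INR12`; since
`SNR2 ≤ INR21`, replacing that term by any nonnegative one costs a factor of two, i.e. one further
bit. The remaining logarithm costs nothing, because the noise only lowers the residual
signal-to-interference ratio below `SNR1 / INR21`. Hence the logarithms contribute `3 / 2`, and the
three offsets `-1 / 2` contribute the other `3 / 2`.
-/

/-- The power, in units of the noise, received when a signal of strength `S` and an interference
of strength `I` are transmitted with correlation `ρ`; the paper's `b_{1,1}(ρ)` is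
`coherentPower ρ SNR1 INR12` and its `b_{1,2}(ρ)` is `coherentPower ρ SNR2 INR21`. -/
noncomputable def coherentPower (ρ S I : ℝ) : ℝ :=
  S + 2 * ρ * Real.sqrt (S * I) + I

/-- The signal-to-interference-plus-noise ratio of the parts of signal and interference that
remain once the component common to both transmitters, a fraction `ρ ^ 2` of the power, is known;
the paper's `b_{4,1}(ρ) / (1 + b_{5,2}(ρ))` is `residualSINR ρ SNR1 INR21`. -/
noncomputable def residualSINR (ρ S I : ℝ) : ℝ :=
  ((1 - ρ ^ 2) * S) / (1 + (1 - ρ ^ 2) * I)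

theorem logb_le_one_add_logb {b x y : ℝ} (hb : 1 < b) (hy : 0 < y) (hyx : y ≤ b * x) :
    Real.logb b y ≤ 1 + Real.logb b x := by
  have hb0 : 0 < b := one_pos.trans hb
  have hx : 0 < x := pos_of_mul_pos_right (hy.trans_le hyx) hb0.le
  calc Real.logb b y ≤ Real.logb b (b * x) := Real.logb_le_logb_of_le hb hy hyx
    _ = 1 + Real.logb b x := by
      rw [Real.logb_mul hb0.ne' hx.ne', Real.logb_self_eq_one hb]

theorem abs_two_mul_mul_sqrt_mul_le {ρ a b : ℝ} (hρ : |ρ| ≤ 1) (ha : 0 ≤ a) (hb : 0 ≤ b) :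
    |2 * ρ * Real.sqrt (a * b)| ≤ a + b :=
  calc |2 * ρ * Real.sqrt (a * b)| = |ρ| * (2 * Real.sqrt (a * b)) := by
        rw [abs_mul, abs_mul, abs_two, abs_of_nonneg (Real.sqrt_nonneg _)]
        ring
    _ ≤ 2 * Real.sqrt (a * b) := mul_le_of_le_one_left (by positivity) hρ
    _ ≤ a + b := two_mul_le_add_of_sq_le_mul ha hb (Real.sq_sqrt (mul_nonneg ha hb)).le

section Power

variable {ρ S I : ℝ}

theorem coherentPower_nonneg (hρ : |ρ| ≤ 1) (hS : 0 ≤ S) (hI : 0 ≤ I) :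
    0 ≤ coherentPower ρ S I := by
  have := neg_le_of_abs_le (abs_two_mul_mul_sqrt_mul_le hρ hS hI)
  unfold coherentPower
  linarith

theorem coherentPower_le_two_mul_add (hρ : |ρ| ≤ 1) (hS : 0 ≤ S) (hI : 0 ≤ I) :
    coherentPower ρ S I ≤ 2 * (S + I) := by
  have := le_of_abs_le (abs_two_mul_mul_sqrt_mul_le hρ hS hI)
  unfold coherentPower
  linarith

theorem logb_coherentPower_add_one_le (hρ : |ρ| ≤ 1) (hS : 0 ≤ S) (hI : 0 ≤ I) :
    Real.logb 2 (coherentPower ρ S I + 1) ≤ 1 + Real.logb 2 (S + I + 1) := by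
  have hpos := coherentPower_nonneg hρ hS hI
  have hle := coherentPower_le_two_mul_add hρ hS hI
  exact logb_le_one_add_logb one_lt_two (by positivity) (by linarith)

theorem logb_coherentPower_add_one_le_of_le {q : ℝ} (hρ : |ρ| ≤ 1) (hS : 0 ≤ S) (hSI : S ≤ I)
    (hq : 0 ≤ q) :
    Real.logb 2 (coherentPower ρ S I + 1) ≤ 2 + Real.logb 2 (q + I + 1) := by
  have hI : 0 ≤ I := hS.trans hSI
  have hcoherent := logb_coherentPower_add_one_le hρ hS hI
  have hdropSignal : Real.logb 2 (S + I + 1) ≤ 1 + Real.logb 2 (q + I + 1) :=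
    logb_le_one_add_logb one_lt_two (by positivity) (by linarith)
  linarith

theorem residualSINR_nonneg (hρ : |ρ| ≤ 1) (hS : 0 ≤ S) (hI : 0 ≤ I) :
    0 ≤ residualSINR ρ S I := by
  have hfraction : 0 ≤ 1 - ρ ^ 2 := sub_nonneg.2 ((sq_le_one_iff_abs_le_one ρ).2 hρ)
  unfold residualSINR
  positivity

theorem residualSINR_le_div (hρ : |ρ| ≤ 1) (hS : 0 ≤ S) (hI : 0 < I) :
    residualSINR ρ S I ≤ S / I := by
  have hfraction : 0 ≤ 1 - ρ ^ 2 := sub_nonneg.2 ((sq_le_one_iff_abs_le_one ρ).2 hρ)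
  unfold residualSINR
  rw [div_le_div_iff₀ (by positivity) hI]
  linarith

theorem logb_one_add_residualSINR_le (hρ : |ρ| ≤ 1) (hS : 0 ≤ S) (hI : 0 < I) :
    Real.logb 2 (1 + residualSINR ρ S I) ≤ Real.logb 2 (2 + S / I) := by
  have hpos := residualSINR_nonneg hρ hS hI.le
  have hle := residualSINR_le_div hρ hS hI
  exact Real.logb_le_logb_of_le one_lt_two (by positivity) (by linarith)

end Power

theorem weighted_sum_rate_gap_case11_general {SNR1 SNR2 INR12 INR21 ρ : ℝ}
    (hS1 : 0 ≤ SNR1) (hS2 : 0 ≤ SNR2) (h12 : 0 < INR12) (h21 : 0 < INR21)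
    (hHIR2 : SNR2 ≤ INR21) (hρ : |ρ| ≤ 1) :
    ((1/2) * Real.logb 2 (coherentPower ρ SNR1 INR12 + 1) +
      ((1/2) * Real.logb 2 (1 + residualSINR ρ SNR1 INR21) +
        (1/2) * Real.logb 2 (coherentPower ρ SNR2 INR21 + 1))) -
    (((1/2) * Real.logb 2 (2 + SNR1 / INR21) - 1/2) +
      ((1/2) * Real.logb 2 (SNR1 + INR12 + 1) - 1/2) +
      ((1/2) * Real.logb 2 (SNR2 / INR12 + INR21 + 1) - 1/2)) ≤ 3 := by
  have hpower1 := logb_coherentPower_add_one_le hρ hS1 h12.le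
  have hresidual := logb_one_add_residualSINR_le hρ hS1 h21
  have hpower2 := logb_coherentPower_add_one_le_of_le hρ hS2 hHIR2 (div_nonneg hS2 h12.le)
  linarith

/-- Weighted sum-rate gap in Case 1.1:
`κ_{1,1}(ρ') + κ_4(ρ') − (a_{1,1} + a_{7,1}(0,0,0) + a_{5,2}(0,0)) ≤ 3`. -/
theorem weighted_sum_rate_gap_case11
    (SNR1 SNR2 INR12 INR21 : ℝ)
    (hS1 : 0 < SNR1) (hS2 : 0 < SNR2) (h12 : 1 < INR12) (h21 : 1 < INR21)
    (hHIR2 : INR21 > SNR2) :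
    ∀ ρ' ∈ Set.Ico (0 : ℝ) 1,
    ((1/2) * Real.logb 2 ((SNR1 + 2 * ρ' * Real.sqrt (SNR1 * INR12) + INR12) + 1) +
      ((1/2) * Real.logb 2 (1 + ((1 - ρ'^2) * SNR1) / (1 + (1 - ρ'^2) * INR21)) +
        (1/2) * Real.logb 2 ((SNR2 + 2 * ρ' * Real.sqrt (SNR2 * INR21) + INR21) + 1))) -
    (((1/2) * Real.logb 2 (2 + SNR1 / INR21) - 1/2) +
      ((1/2) * Real.logb 2 (SNR1 + INR12 + 1) - 1/2) +
      ((1/2) * Real.logb 2 (SNR2 / INR12 + INR21 + 1) - 1/2)) ≤ 3 := by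
  rintro ρ ⟨hρ0, hρ1⟩
  exact weighted_sum_rate_gap_case11_general hS1.le hS2.le (one_pos.trans h12) (one_pos.trans h21)
    hHIR2.le ((abs_of_nonneg hρ0).trans_le hρ1.le)
end
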